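/- Let Ω ⊂ ℂ be a compact set whose boundary ∂Ω is a C¹ simple closed curve, positively oriented, parametrized by γ. Let k ∈ ℂ with k ≠ 0 and let z ∈ ℂ \ ∂Ω. Then ∫_Ω e^{\bar{k}\bar{w} − kw}/(z − w) dL(w) = (1/(2i\bar{k})) ∮_{∂Ω} e^{\bar{k}\bar{w} − kw}/(z − w) dw + (π/\bar{k}) e^{\bar{k}\bar{z} − kz} · 1_Ω(z), where L denotes the Lebesgue measure on ℂ and 1_Ω is the indicator function of Ω. -/

import Mathlib

open MeasureTheory Set Metric
open Complex ComplexConjugate Filter Topology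

/-- The Wirtinger derivative `∂f/∂w̄`. -/
noncomputable def dbar (f : ℂ → ℂ) (w : ℂ) : ℂ :=
  (fderiv ℝ f w 1 + I * fderiv ℝ f w I) / 2

theorem HasFDerivAt.dbar_eq {f : ℂ → ℂ} {f' : ℂ →L[ℝ] ℂ} {w : ℂ} (h : HasFDerivAt f f' w) :
    dbar f w = (f' 1 + I * f' I) / 2 := by
  rw [dbar, h.fderiv]

theorem dbar_mul {f g : ℂ → ℂ} {w : ℂ} (hf : DifferentiableAt ℝ f w)
    (hg : DifferentiableAt ℝ g w) :
    dbar (fun v ↦ f v * g v) w = dbar f w * g w + f w * dbar g w := by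
  rw [(hf.hasFDerivAt.fun_mul hg.hasFDerivAt).dbar_eq, dbar, dbar]
  simp
  ring

theorem Filter.EventuallyEq.dbar_eq {f g : ℂ → ℂ} {w : ℂ} (h : f =ᶠ[𝓝 w] g) :
    dbar f w = dbar g w := by
  rw [dbar, dbar, h.fderiv_eq]

theorem ContDiff.continuous_dbar {f : ℂ → ℂ} (hf : ContDiff ℝ 1 f) : Continuous (dbar f) := by
  have := hf.continuous_fderiv one_ne_zero
  unfold dbar
  fun_prop

theorem HasCompactSupport.dbar {f : ℂ → ℂ} (hf : HasCompactSupport f) :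
    HasCompactSupport (dbar f) := by
  refine (hf.fderiv ℝ).mono fun w hw ↦ ?_
  contrapose! hw
  simp only [Function.mem_support, not_not] at hw ⊢
  simp [_root_.dbar, hw]

theorem integral_dbar_eq_zero {f : ℂ → ℂ} (hf : ContDiff ℝ 1 f) (hc : HasCompactSupport f) :
    ∫ w, dbar f w = 0 := by
  have hd : ∀ v, Integrable fun w ↦ fderiv ℝ f w v := fun v ↦
    ((hf.continuous_fderiv one_ne_zero).clm_apply continuous_const).integrable_of_hasCompactSupport
      (hc.fderiv_apply ℝ v)
  have h0 : ∀ v, ∫ w, fderiv ℝ f w v = 0 := fun v ↦ by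
    have := integral_mul_fderiv_eq_neg_fderiv_mul_of_integrable (μ := (volume : Measure ℂ))
      (f := fun _ : ℂ ↦ (1 : ℂ)) (g := f) (v := v) (by simp) (by simpa using hd v)
      (by simpa using hf.continuous.integrable_of_hasCompactSupport hc)
      (fun _ _ ↦ by fun_prop) (fun _ _ ↦ hf.differentiable one_ne_zero _)
    simpa using this
  simp only [_root_.dbar]
  rw [integral_div, integral_add (hd 1) ((hd I).const_mul I), integral_const_mul, h0, h0]
  simp

/-- A smooth approximation of the Cauchy kernel `1 / (z - w)`, converging to it as `c → ∞`. -/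
noncomputable def cauchyApprox (c : ℝ) (z w : ℂ) : ℂ :=
  c ^ 2 * conj (z - w) / (1 + c ^ 2 * ((z - w) * conj (z - w)))

theorem one_add_sq_mul_mul_conj (c : ℝ) (v : ℂ) :
    1 + (c : ℂ) ^ 2 * (v * conj v) = ((1 + c ^ 2 * ‖v‖ ^ 2 : ℝ) : ℂ) := by
  rw [mul_conj, normSq_eq_norm_sq]
  push_cast
  ring

theorem one_add_sq_mul_mul_conj_ne_zero (c : ℝ) (v : ℂ) :
    1 + (c : ℂ) ^ 2 * (v * conj v) ≠ 0 := by
  rw [one_add_sq_mul_mul_conj, ofReal_ne_zero]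
  positivity

theorem contDiff_conj : ContDiff ℝ 1 (fun w : ℂ ↦ conj w) := conjCLE.contDiff

theorem contDiff_cauchyApprox (c : ℝ) (z : ℂ) : ContDiff ℝ 1 (cauchyApprox c z) := by
  have h : ContDiff ℝ 1 (fun w : ℂ ↦ conj (z - w)) :=
    contDiff_conj.comp (contDiff_const.sub contDiff_id)
  have hD : ContDiff ℝ 1 (fun w : ℂ ↦ 1 + (c : ℂ) ^ 2 * ((z - w) * conj (z - w))) :=
    contDiff_const.add (contDiff_const.mul ((contDiff_const.sub contDiff_id).mul h))
  exact (contDiff_const.mul h).mul (hD.inv fun w ↦ one_add_sq_mul_mul_conj_ne_zero c _)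

theorem dbar_cauchyApprox (c : ℝ) (z w : ℂ) :
    dbar (cauchyApprox c z) w = -((c ^ 2 / (1 + c ^ 2 * ‖z - w‖ ^ 2) ^ 2 : ℝ) : ℂ) := by
  have hsub : HasFDerivAt (fun v : ℂ ↦ z - v) (-ContinuousLinearMap.id ℝ ℂ) w :=
    (hasFDerivAt_id w).const_sub z
  have hconj : HasFDerivAt (fun v : ℂ ↦ conj (z - v))
      ((conjCLE : ℂ →L[ℝ] ℂ).comp (-ContinuousLinearMap.id ℝ ℂ)) w :=
    (conjCLE : ℂ ≃L[ℝ] ℂ).hasFDerivAt.comp w hsub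
  have hD : HasFDerivAt (fun v : ℂ ↦ 1 + (c : ℂ) ^ 2 * ((z - v) * conj (z - v))) _ w :=
    ((hsub.fun_mul hconj).const_mul ((c : ℂ) ^ 2)).const_add 1
  have hN := hconj.const_mul ((c : ℂ) ^ 2)
  have hu := (contDiff_cauchyApprox c z).differentiable one_ne_zero w
  have hprod := dbar_mul hu hD.differentiableAt
  have heq : (fun v ↦ cauchyApprox c z v * (1 + (c : ℂ) ^ 2 * ((z - v) * conj (z - v))))
      = fun v ↦ (c : ℂ) ^ 2 * conj (z - v) :=
    funext fun v ↦ div_mul_cancel₀ _ (one_add_sq_mul_mul_conj_ne_zero c _)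
  rw [heq, hN.dbar_eq, hD.dbar_eq, cauchyApprox] at hprod
  have hne := one_add_sq_mul_mul_conj_ne_zero c (z - w)
  push_cast
  have h1 := one_add_sq_mul_mul_conj c (z - w)
  push_cast at h1
  rw [← h1]
  have hI := I_sq
  simp only [smul_apply, add_apply,
    ContinuousLinearMap.comp_apply, neg_apply, ContinuousLinearMap.id_apply,
    ContinuousLinearEquiv.coe_coe, conjCLE_apply, map_neg, map_one, conj_I, smul_eq_mul] at hprod
  generalize conj (z - w) = b at *
  generalize z - w = a at *
  generalize dbar (cauchyApprox c z) w = d at *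
  have e : d * (1 + (c : ℂ) ^ 2 * (a * b)) ^ 2 = -(c : ℂ) ^ 2 := by
    have hne' : 1 + (c : ℂ) ^ 2 * a * b ≠ 0 := by rwa [mul_assoc]
    field_simp at hprod
    rw [hI] at hprod
    linear_combination (-1/2) * hprod
  rw [← neg_div, eq_div_iff (pow_ne_zero 2 hne), e]

theorem norm_cauchyApprox_le (c : ℝ) (z w : ℂ) : ‖cauchyApprox c z w‖ ≤ ‖(z - w)⁻¹‖ := by
  rw [cauchyApprox, one_add_sq_mul_mul_conj, norm_div, norm_mul, norm_real, RCLike.norm_conj,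
    norm_pow, norm_real, norm_inv, Real.norm_eq_abs, Real.norm_eq_abs, sq_abs,
    abs_of_pos (by positivity)]
  rcases eq_or_ne ‖z - w‖ 0 with h | h
  · simp [h]
  · rw [div_le_iff₀ (by positivity), mul_add, mul_one]
    have : ‖z - w‖⁻¹ * (c ^ 2 * ‖z - w‖ ^ 2) = c ^ 2 * ‖z - w‖ := by field_simp
    rw [this]
    have : 0 ≤ ‖z - w‖⁻¹ := by positivity
    linarith

theorem tendsto_cauchyApprox {z w : ℂ} (h : w ≠ z) :
    Tendsto (fun c ↦ cauchyApprox c z w) atTop (𝓝 (z - w)⁻¹) := by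
  have hv : z - w ≠ 0 := sub_ne_zero.mpr h.symm
  have hv' : conj (z - w) ≠ 0 := (map_ne_zero _).mpr hv
  have h1 : Tendsto (fun c : ℝ ↦ ((c ^ 2)⁻¹ : ℝ)) atTop (𝓝 0) :=
    (tendsto_pow_atTop two_ne_zero).inv_tendsto_atTop
  have h2 : Tendsto (fun c : ℝ ↦ (((c ^ 2)⁻¹ : ℝ) : ℂ)) atTop (𝓝 0) := by
    rw [← ofReal_zero]
    exact (continuous_ofReal.tendsto 0).comp h1
  have h3 : Tendsto (fun c : ℝ ↦ conj (z - w) /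
      ((((c ^ 2)⁻¹ : ℝ) : ℂ) + (z - w) * conj (z - w))) atTop (𝓝 (z - w)⁻¹) := by
    have := (tendsto_const_nhds (x := conj (z - w))).div
      (h2.add_const ((z - w) * conj (z - w)))
      (by rw [zero_add]; exact mul_ne_zero hv hv')
    have hlim : conj (z - w) / (0 + (z - w) * conj (z - w)) = (z - w)⁻¹ := by
      rw [zero_add, div_mul_cancel_right₀ hv']
    rwa [hlim] at this
  refine h3.congr' ?_
  filter_upwards [eventually_gt_atTop 0] with c hc
  have hc' : (c : ℂ) ≠ 0 := by exact_mod_cast hc.ne'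
  have := one_add_sq_mul_mul_conj_ne_zero c (z - w)
  rw [cauchyApprox]
  push_cast
  have e : ((c : ℂ) ^ 2)⁻¹ + (z - w) * conj (z - w)
    = (1 + (c : ℂ) ^ 2 * ((z - w) * conj (z - w))) / (c : ℂ) ^ 2 := by field_simp
  rw [e, div_div_eq_mul_div, mul_comm (conj (z - w))]

theorem locallyIntegrable_inv_norm : LocallyIntegrable (fun w : ℂ ↦ ‖w‖⁻¹) := by
  refine locallyIntegrable_of_norm_le_rpow (C := 1) (α := 1) (by simp) (by simp) ?_ ?_
  · exact .of_forall fun w ↦ by simp [Real.rpow_neg_one]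
  · exact (measurable_norm.inv).aestronglyMeasurable

theorem integral_poisson_eq_one :
    ∫ w : ℂ, (Real.pi * (1 + ‖w‖ ^ 2) ^ 2)⁻¹ = 1 := by
  have key : ∫ y in Ioi (0 : ℝ), y * (Real.pi * (1 + y ^ 2) ^ 2)⁻¹ = (2 * Real.pi)⁻¹ := by
    have hd : ∀ y ∈ Ici (0 : ℝ), HasDerivAt (fun y ↦ -(2 * Real.pi * (1 + y ^ 2))⁻¹)
        (y * (Real.pi * (1 + y ^ 2) ^ 2)⁻¹) y := fun y _ ↦ by
      have hne : 2 * Real.pi * (1 + y ^ 2) ≠ 0 := by positivity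
      have := ((((hasDerivAt_pow 2 y).const_add 1).const_mul (2 * Real.pi)).fun_inv hne).neg
      refine this.congr_deriv ?_
      have := Real.pi_pos.ne'
      have : 1 + y ^ 2 ≠ 0 := by positivity
      field_simp
      norm_num
    have ht : Tendsto (fun y : ℝ ↦ -(2 * Real.pi * (1 + y ^ 2))⁻¹) atTop (𝓝 0) := by
      rw [← neg_zero]
      exact (((tendsto_atTop_add_const_left _ 1 (tendsto_pow_atTop two_ne_zero)).const_mul_atTop
        (by positivity)).inv_tendsto_atTop).neg
    rw [integral_Ioi_of_hasDerivAt_of_nonneg' hd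
      (fun y hy ↦ mul_nonneg (le_of_lt hy) (by positivity)) ht]
    simp
  rw [integral_fun_norm_addHaar volume fun y ↦ (Real.pi * (1 + y ^ 2) ^ 2)⁻¹]
  have hpi := Real.pi_pos.ne'
  simp only [Measure.real, Complex.volume_ball, finrank_real_complex, Nat.add_one_sub_one, pow_one,
    smul_eq_mul, key]
  simp


theorem volume_range_eq_zero {γ : ℝ → ℂ} (hγ : ContDiff ℝ 1 γ) : volume (range γ) = 0 := by
  have h : dimH (range γ) < (2 : NNReal) := hγ.dimH_range_le.trans_lt (by simp)
  refine measure_zero_of_dimH_lt ?_ h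
  have : (((2 : NNReal) : ℝ)) = Module.finrank ℝ ℂ := by simp
  rw [this]
  exact Measure.absolutelyContinuous_isAddHaarMeasure _ _

theorem tendsto_integral_mul_cauchyApprox {α : Type*} [MeasurableSpace α] {μ : Measure α}
    {h p : α → ℂ} {z : ℂ} (hp : AEStronglyMeasurable p μ) (hh : AEStronglyMeasurable h μ)
    (hint : Integrable (fun a ↦ h a * (z - p a)⁻¹) μ) (hne : ∀ᵐ a ∂μ, p a ≠ z) :
    Tendsto (fun c ↦ ∫ a, h a * cauchyApprox c z (p a) ∂μ) atTop
      (𝓝 (∫ a, h a * (z - p a)⁻¹ ∂μ)) := by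
  refine tendsto_integral_filter_of_dominated_convergence (fun a ↦ ‖h a * (z - p a)⁻¹‖)
    (.of_forall fun c ↦ hh.mul ((contDiff_cauchyApprox c z).continuous.comp_aestronglyMeasurable hp))
    (.of_forall fun c ↦ .of_forall fun a ↦ ?_) hint.norm ?_
  · rw [norm_mul, norm_mul]
    gcongr
    exact norm_cauchyApprox_le c z _
  · filter_upwards [hne] with a ha
    exact (tendsto_cauchyApprox ha).const_mul _

theorem tendsto_integral_mul_dbar_cauchyApprox {g : ℂ → ℂ} {z : ℂ} (hg : Integrable g)
    (hgz : ContinuousAt g z) :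
    Tendsto (fun c ↦ ∫ w, g w * dbar (cauchyApprox c z) w) atTop (𝓝 (-(Real.pi * g z))) := by
  have hlim : Tendsto
      (fun x : ℂ ↦ ‖x‖ ^ Module.finrank ℝ ℂ * (Real.pi * (1 + ‖x‖ ^ 2) ^ 2)⁻¹)
      (Bornology.cobounded ℂ) (𝓝 0) := by
    have h1 : Tendsto (fun x : ℂ ↦ (‖x‖ ^ 2)⁻¹) (Bornology.cobounded ℂ) (𝓝 0) :=
      ((tendsto_pow_atTop two_ne_zero).comp tendsto_norm_cobounded_atTop).inv_tendsto_atTop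
    refine squeeze_zero (fun x ↦ by positivity) (fun x ↦ ?_) h1
    rcases eq_or_ne x 0 with rfl | hx
    · simp
    have hx' : 0 < ‖x‖ := norm_pos_iff.mpr hx
    rw [finrank_real_complex, ← div_eq_mul_inv, div_le_iff₀ (by positivity),
      inv_mul_eq_div, le_div_iff₀ (by positivity)]
    have : (1 : ℝ) ≤ Real.pi := by linarith [Real.pi_gt_three]
    calc ‖x‖ ^ 2 * ‖x‖ ^ 2 ≤ 1 * (1 + ‖x‖ ^ 2) ^ 2 := by nlinarith
      _ ≤ _ := by gcongr
  have key := tendsto_integral_comp_smul_smul_of_integrable' (fun x : ℂ ↦ by positivity)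
    integral_poisson_eq_one hlim hg hgz
  have key' := key.const_mul (-(Real.pi : ℂ))
  rw [neg_mul] at key'
  refine key'.congr fun c ↦ ?_
  rw [← integral_const_mul]
  refine integral_congr_ae (.of_forall fun w ↦ ?_)
  have hpi : (Real.pi : ℂ) ≠ 0 := by exact_mod_cast Real.pi_ne_zero
  have hnorm : ‖c • (z - w)‖ ^ 2 = c ^ 2 * ‖z - w‖ ^ 2 := by
    rw [norm_smul, mul_pow, Real.norm_eq_abs, sq_abs]
  simp only [hnorm]
  simp only [dbar_cauchyApprox, real_smul, finrank_real_complex]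
  push_cast
  rw [mul_inv]
  field_simp

theorem integrable_mul_inv_sub {g : ℂ → ℂ} (hg : Continuous g) (hc : HasCompactSupport g) (z : ℂ) :
    Integrable fun w ↦ g w * (z - w)⁻¹ := by
  have h := hc.norm.convolutionExists_left (ContinuousLinearMap.mul ℝ ℝ) hg.norm
    locallyIntegrable_inv_norm z
  have hm : AEStronglyMeasurable (fun w ↦ g w * (z - w)⁻¹) volume :=
    hg.aestronglyMeasurable.mul (by fun_prop)
  refine (integrable_norm_iff hm).mp (h.congr (.of_forall fun w ↦ ?_))
  simp

theorem continuous_integral_norm_mul_inv_sub {g : ℂ → ℂ} (hg : Continuous g)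
    (hc : HasCompactSupport g) : Continuous fun z ↦ ∫ w, ‖g w * (z - w)⁻¹‖ := by
  have h := hc.norm.continuous_convolution_left (ContinuousLinearMap.mul ℝ ℝ) hg.norm
    locallyIntegrable_inv_norm
  refine h.congr fun z ↦ integral_congr_ae (.of_forall fun w ↦ ?_)
  simp

/-- The Cauchy–Pompeiu formula on the whole plane. -/
theorem integral_dbar_mul_inv_sub {f : ℂ → ℂ} (hf : ContDiff ℝ 1 f) (hc : HasCompactSupport f)
    (z : ℂ) : ∫ w, dbar f w * (z - w)⁻¹ = Real.pi * f z := by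
  have h1 := tendsto_integral_mul_cauchyApprox (μ := volume) (p := fun w : ℂ ↦ w) (z := z)
    aestronglyMeasurable_id hf.continuous_dbar.aestronglyMeasurable
    (integrable_mul_inv_sub hf.continuous_dbar hc.dbar z) (Measure.ae_ne volume z)
  have h2 := (tendsto_integral_mul_dbar_cauchyApprox
    (hf.continuous.integrable_of_hasCompactSupport hc) hf.continuous.continuousAt (z := z)).neg
  rw [neg_neg] at h2
  refine tendsto_nhds_unique (h1.congr fun c ↦ ?_) h2
  have hu := contDiff_cauchyApprox c z
  have h0 := integral_dbar_eq_zero (hf.mul hu) hc.mul_right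
  have hmul := fun w ↦ dbar_mul (hf.differentiable one_ne_zero w) (hu.differentiable one_ne_zero w)
  simp only [hmul] at h0
  rw [integral_add] at h0
  · exact eq_neg_of_add_eq_zero_left h0
  · exact (hf.continuous_dbar.mul hu.continuous).integrable_of_hasCompactSupport hc.dbar.mul_right
  · exact (hf.continuous.mul hu.continuous_dbar).integrable_of_hasCompactSupport hc.mul_right

/-- Green's theorem in complex form, for a region described by the winding number of its
boundary. -/
theorem integral_curve_eq_integral_dbar {Ω : Set ℂ} (hΩ : IsCompact Ω) {γ : ℝ → ℂ} {L : ℝ}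
    (hL : 0 < L) (hγ : ContDiff ℝ 1 γ) (hnull : volume (frontier Ω) = 0)
    (hwind : ∀ z ∉ frontier Ω, ∫ t in (0 : ℝ)..L, deriv γ t / (γ t - z)
      = 2 * Real.pi * I * indicator Ω 1 z)
    {f : ℂ → ℂ} (hf : ContDiff ℝ 1 f) (hc : HasCompactSupport f) :
    ∫ t in (0 : ℝ)..L, f (γ t) * deriv γ t = 2 * I * ∫ w in Ω, dbar f w := by
  have hdγ : Continuous (deriv γ) := hγ.continuous_deriv_one
  have hpi : (Real.pi : ℂ) ≠ 0 := by exact_mod_cast Real.pi_ne_zero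
  have hint : Integrable (Function.uncurry fun (t : ℝ) (w : ℂ) ↦
      deriv γ t * (dbar f w * (γ t - w)⁻¹)) ((volume.restrict (Ioc 0 L)).prod volume) := by
    have hm : Measurable (Function.uncurry fun (t : ℝ) (w : ℂ) ↦
        deriv γ t * (dbar f w * (γ t - w)⁻¹)) := by
      have h1 := hdγ.measurable
      have h2 := hf.continuous_dbar.measurable
      have h3 := hγ.continuous.measurable
      unfold Function.uncurry
      fun_prop
    rw [integrable_prod_iff hm.aestronglyMeasurable]
    constructor
    · exact .of_forall fun t ↦
        (integrable_mul_inv_sub hf.continuous_dbar hc.dbar (γ t)).const_mul (deriv γ t)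
    · have hcont : Continuous fun t ↦ ‖deriv γ t‖ * ∫ w, ‖dbar f w * (γ t - w)⁻¹‖ :=
        hdγ.norm.mul ((continuous_integral_norm_mul_inv_sub hf.continuous_dbar hc.dbar).comp
          hγ.continuous)
      refine ((hcont.integrableOn_Icc (a := 0) (b := L)).mono_set Ioc_subset_Icc_self).congr
        (.of_forall fun t ↦ ?_)
      simp only [Function.uncurry]
      rw [← integral_const_mul]
      simp only [norm_mul]
  have hswap := integral_integral_swap hint
  have hleft : ∀ t, ∫ w, deriv γ t * (dbar f w * (γ t - w)⁻¹)
      = Real.pi * (f (γ t) * deriv γ t) := fun t ↦ by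
    rw [integral_const_mul, integral_dbar_mul_inv_sub hf hc]
    ring
  have hright : ∀ᵐ w : ℂ, ∫ t in Ioc 0 L, deriv γ t * (dbar f w * (γ t - w)⁻¹)
      = Ω.indicator (fun w ↦ 2 * Real.pi * I * dbar f w) w := by
    filter_upwards [compl_mem_ae_iff.mpr hnull] with w hw
    have h := hwind w hw
    rw [intervalIntegral.integral_of_le hL.le] at h
    calc ∫ t in Ioc 0 L, deriv γ t * (dbar f w * (γ t - w)⁻¹)
        = ∫ t in Ioc 0 L, dbar f w * (deriv γ t / (γ t - w)) := by
          congr 1; ext t; rw [div_eq_mul_inv]; ring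
      _ = _ := by
          rw [integral_const_mul, h]
          by_cases hw : w ∈ Ω <;> simp [hw, mul_comm]
  simp only [hleft] at hswap
  rw [integral_congr_ae hright, integral_indicator hΩ.measurableSet, integral_const_mul,
    integral_const_mul] at hswap
  rw [intervalIntegral.integral_of_le hL.le]
  apply mul_left_cancel₀ hpi
  rw [hswap]
  ring

/-- The Cauchy–Pompeiu formula for a region described by the winding number of its boundary. -/
theorem setIntegral_dbar_mul_inv_sub {Ω : Set ℂ} (hΩ : IsCompact Ω) {γ : ℝ → ℂ} {L : ℝ}
    (hL : 0 < L) (hγ : ContDiff ℝ 1 γ) (hmem : ∀ t, γ t ∈ frontier Ω)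
    (hnull : volume (frontier Ω) = 0)
    (hwind : ∀ z ∉ frontier Ω, ∫ t in (0 : ℝ)..L, deriv γ t / (γ t - z)
      = 2 * Real.pi * I * indicator Ω 1 z)
    {f : ℂ → ℂ} (hf : ContDiff ℝ 1 f) (hc : HasCompactSupport f) {z : ℂ} (hz : z ∉ frontier Ω) :
    2 * I * ∫ w in Ω, dbar f w * (z - w)⁻¹
      = (∫ t in (0 : ℝ)..L, f (γ t) * deriv γ t * (z - γ t)⁻¹)
        + 2 * I * (Real.pi * Ω.indicator f z) := by
  have hdγ : Continuous (deriv γ) := hγ.continuous_deriv_one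
  have hne : ∀ t, z - γ t ≠ 0 := fun t h ↦ hz (sub_eq_zero.mp h ▸ hmem t)
  have harea := tendsto_integral_mul_cauchyApprox (μ := volume.restrict Ω) (p := fun w : ℂ ↦ w)
    (z := z) aestronglyMeasurable_id hf.continuous_dbar.aestronglyMeasurable
    (integrable_mul_inv_sub hf.continuous_dbar hc.dbar z).integrableOn
    (ae_restrict_of_ae (Measure.ae_ne volume z))
  have hcurve : Tendsto
      (fun c ↦ ∫ t in Ioc 0 L, f (γ t) * deriv γ t * cauchyApprox c z (γ t)) atTop
      (𝓝 (∫ t in Ioc 0 L, f (γ t) * deriv γ t * (z - γ t)⁻¹)) := by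
    have hcont : Continuous fun t ↦ f (γ t) * deriv γ t := (hf.continuous.comp hγ.continuous).mul hdγ
    refine tendsto_integral_mul_cauchyApprox hγ.continuous.aestronglyMeasurable
      hcont.aestronglyMeasurable ?_ (.of_forall fun t h ↦ hne t (by rw [h, sub_self]))
    exact ((hcont.mul ((continuous_const.sub hγ.continuous).inv₀ hne)).integrableOn_Icc
      (a := 0) (b := L)).mono_set Ioc_subset_Icc_self
  have hcontAt : ContinuousAt (Ω.indicator f) z :=
    hf.continuous.continuousOn.continuousAt_indicator hz
  have hdelta := tendsto_integral_mul_dbar_cauchyApprox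
    ((hf.continuous.integrable_of_hasCompactSupport hc).indicator hΩ.measurableSet) hcontAt
  have hgreen : ∀ c, ∫ t in Ioc 0 L, f (γ t) * deriv γ t * cauchyApprox c z (γ t)
      = 2 * I * ((∫ w in Ω, dbar f w * cauchyApprox c z w)
        + ∫ w, Ω.indicator f w * dbar (cauchyApprox c z) w) := fun c ↦ by
    have hu := contDiff_cauchyApprox c z
    have h := integral_curve_eq_integral_dbar hΩ hL hγ hnull hwind (hf.mul hu) hc.mul_right
    have hmul := fun w ↦
      dbar_mul (hf.differentiable one_ne_zero w) (hu.differentiable one_ne_zero w)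
    simp only [hmul] at h
    rw [integral_add, intervalIntegral.integral_of_le hL.le] at h
    · have hind : ∀ w, Ω.indicator f w * dbar (cauchyApprox c z) w
          = Ω.indicator (fun w ↦ f w * dbar (cauchyApprox c z) w) w := fun w ↦ by
        by_cases hw : w ∈ Ω <;> simp [hw]
      simp only [hind]
      rw [integral_indicator hΩ.measurableSet, ← h]
      congr 1; ext t; ring
    · exact ((hf.continuous_dbar.mul hu.continuous).integrable_of_hasCompactSupport
        hc.dbar.mul_right).integrableOn
    · exact ((hf.continuous.mul hu.continuous_dbar).integrable_of_hasCompactSupport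
        hc.mul_right).integrableOn
  simp only [hgreen] at hcurve
  have h := tendsto_nhds_unique hcurve ((harea.add hdelta).const_mul (2 * I))
  rw [intervalIntegral.integral_of_le hL.le, h]
  ring

theorem dbar_exp_conj_mul_sub_mul (k w : ℂ) :
    dbar (fun v ↦ exp (conj k * conj v - k * v)) w
      = conj k * exp (conj k * conj w - k * w) := by
  have hconj : HasFDerivAt (fun v : ℂ ↦ conj v) (conjCLE : ℂ →L[ℝ] ℂ) w :=
    (conjCLE : ℂ ≃L[ℝ] ℂ).hasFDerivAt
  have hid : HasFDerivAt (fun v : ℂ ↦ v) (ContinuousLinearMap.id ℝ ℂ) w := hasFDerivAt_id w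
  have h := ((hconj.const_mul (conj k)).fun_sub (hid.const_mul k)).cexp
  rw [h.dbar_eq]
  simp
  linear_combination (- exp (conj k * conj w - k * w) * (conj k + k) / 2) * I_sq

/-- For a compact set `Ω ⊂ ℂ` whose boundary is a `C¹` simple closed
curve, positively oriented and parametrized by `γ` (positive orientation encoded by the
winding-number condition), for `k ≠ 0` and `z ∉ ∂Ω`,
`∫_Ω e^{k̄w̄ − kw}/(z − w) dL(w)
  = (1/(2i k̄)) ∮_{∂Ω} e^{k̄w̄ − kw}/(z − w) dw + (π/k̄) e^{k̄z̄ − kz} 1_Ω(z)`. -/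
theorem stmt_0
    (Ω : Set ℂ) (hΩ : IsCompact Ω)
    (γ : ℝ → ℂ) (L : ℝ) (hL : 0 < L)
    (hγ : ContDiff ℝ 1 γ) (hper : Function.Periodic γ L)
    (hinj : Set.InjOn γ (Set.Ico 0 L))
    (himg : γ '' Set.Ico 0 L = frontier Ω)
    (horient : ∀ z ∉ frontier Ω,
      ∫ t in (0:ℝ)..L, deriv γ t / (γ t - z)
        = 2 * Real.pi * Complex.I * Set.indicator Ω 1 z)
    (k : ℂ) (hk : k ≠ 0) (z : ℂ) (hz : z ∉ frontier Ω) :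
    (∫ w in Ω,
        Complex.exp ((starRingEnd ℂ) k * (starRingEnd ℂ) w - k * w) / (z - w))
      = (1 / (2 * Complex.I * (starRingEnd ℂ) k)) *
          (∫ t in (0:ℝ)..L,
            Complex.exp ((starRingEnd ℂ) k * (starRingEnd ℂ) (γ t) - k * γ t)
              / (z - γ t) * deriv γ t)
        + ((Real.pi : ℂ) / (starRingEnd ℂ) k) *
            Complex.exp ((starRingEnd ℂ) k * (starRingEnd ℂ) z - k * z) *
            Set.indicator Ω 1 z := by
  set e : ℂ → ℂ := fun v ↦ exp (conj k * conj v - k * v)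
  have hkc : conj k ≠ 0 := (map_ne_zero _).mpr hk
  have hmem : ∀ t, γ t ∈ frontier Ω := fun t ↦ by
    obtain ⟨s, hs, hst⟩ := hper.exists_mem_Ico₀ hL t
    exact himg ▸ ⟨s, hs, hst.symm⟩
  have hnull : volume (frontier Ω) = 0 :=
    measure_mono_null (himg ▸ image_subset_range _ _) (volume_range_eq_zero hγ)
  obtain ⟨R, hR, hΩR⟩ : ∃ R > 0, Ω ⊆ ball 0 R := hΩ.isBounded.subset_ball_lt 0 0 |>.imp
    fun R h ↦ ⟨h.1, h.2⟩
  let χ : ContDiffBump (0 : ℂ) := ⟨R, R + 1, hR, by linarith⟩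
  have heC : ContDiff ℝ 1 e :=
    ((contDiff_const.mul contDiff_conj).sub (contDiff_const.mul contDiff_id)).cexp
  set f : ℂ → ℂ := fun w ↦ (χ w : ℂ) * e w with hf_def
  have hf : ContDiff ℝ 1 f := (ofRealCLM.contDiff.comp χ.contDiff).mul heC
  have hc : HasCompactSupport f := by
    refine HasCompactSupport.mul_right ?_
    exact χ.hasCompactSupport.comp_left (g := fun x : ℝ ↦ (x : ℂ)) ofReal_zero
  have hfe : ∀ w ∈ Ω, f =ᶠ[𝓝 w] e := fun w hw ↦ by
    filter_upwards [isOpen_ball.mem_nhds (hΩR hw)] with v hv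
    simp [hf_def, χ.one_of_mem_closedBall (ball_subset_closedBall hv)]
  have hmain := setIntegral_dbar_mul_inv_sub hΩ hL hγ hmem hnull horient hf hc hz
  have harea : ∫ w in Ω, dbar f w * (z - w)⁻¹ = conj k * ∫ w in Ω, e w / (z - w) := by
    rw [← integral_const_mul]
    refine setIntegral_congr_fun hΩ.measurableSet fun w hw ↦ ?_
    rw [(hfe w hw).dbar_eq, dbar_exp_conj_mul_sub_mul, div_eq_mul_inv, mul_assoc]
  have hcurve : ∫ t in (0 : ℝ)..L, f (γ t) * deriv γ t * (z - γ t)⁻¹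
      = ∫ t in (0 : ℝ)..L, e (γ t) / (z - γ t) * deriv γ t := by
    congr 1
    ext t
    rw [(hfe _ (hΩ.isClosed.frontier_subset (hmem t))).eq_of_nhds]
    ring
  have hind : Ω.indicator f z = e z * Ω.indicator 1 z := by
    by_cases hw : z ∈ Ω
    · simp [hw, (hfe z hw).eq_of_nhds]
    · simp [hw]
  rw [harea, hcurve, hind] at hmain
  change ∫ w in Ω, e w / (z - w) = _ * (∫ t in (0 : ℝ)..L, e (γ t) / (z - γ t) * deriv γ t)
    + _ * e z * _
  have hI := I_ne_zero
  generalize ∫ t in (0 : ℝ)..L, e (γ t) / (z - γ t) * deriv γ t = J at *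
  field_simp
  linear_combination hmain
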